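/- Fix c ≥ 0 and for 0 ≤ t < 1 define u_c(t,x) = v( (c+t)/(1−t), x/(1−t) ), where v(c',y) = √((x_+(c')−y)(y−x_−(c')))/(2πy)·χ_{(x_−(c'),x_+(c'))}(y) with x_±(c') = (√(c'+1) ± 1)². Then for every t ∈ [0,1) and every x in the support of u_c(t,·) (i.e. with 2(2+c−t)x − (c+t)² − x² > 0), the Marchenko–Pastur family u_c satisfies the nonlocal transport equation ∂_t u_c(t,x) + (1/π)·∂_x [ arctan( Hu_c(t,·)(x) / u_c(t,x) ) ] = 0. -/

import Mathlib

open MeasureTheory Real Filter Topology Set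

/-- Chebyshev polynomial of the first kind, `T_k`, evaluated at a real number. -/
noncomputable def chebT (k : ℕ) (x : ℝ) : ℝ := (Polynomial.Chebyshev.T ℝ k).eval x

/-- Chebyshev polynomial of the second kind, `U_k`, evaluated at a real number. -/
noncomputable def chebU (k : ℕ) (x : ℝ) : ℝ := (Polynomial.Chebyshev.U ℝ k).eval x

/-- `HasHilbertTransform f x L` means the Hilbert transform
`Hf(x) = (1/π) · p.v. ∫ f(y)/(x−y) dy` exists and equals `L`, the principal value
being the limit as `ε → 0⁺` of the integral over `{y : |x−y| > ε}`. -/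
def HasHilbertTransform (f : ℝ → ℝ) (x L : ℝ) : Prop :=
  Tendsto (fun ε : ℝ => (1 / π) * ∫ y in {y : ℝ | ε < |x - y|}, f y / (x - y))
    (𝓝[>] 0) (𝓝 L)

/-- Left edge `x_− = (√(c+1) − 1)²` of the Marchenko–Pastur distribution. -/
noncomputable def mpXm (c : ℝ) : ℝ := (Real.sqrt (c + 1) - 1) ^ 2

/-- Right edge `x_+ = (√(c+1) + 1)²` of the Marchenko–Pastur distribution. -/
noncomputable def mpXp (c : ℝ) : ℝ := (Real.sqrt (c + 1) + 1) ^ 2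

/-- Marchenko–Pastur density `v(c,y) = √((x_+−y)(y−x_−))/(2πy)` on `(x_−, x_+)`,
extended by `0` outside. -/
noncomputable def mpDensity (c : ℝ) (y : ℝ) : ℝ :=
  Set.indicator (Set.Ioo (mpXm c) (mpXp c))
    (fun z => Real.sqrt ((mpXp c - z) * (z - mpXm c)) / (2 * π * z)) y

/-- Logarithmic part of the antiderivative. -/
noncomputable def mpLog (a b x z : ℝ) : ℝ :=
  2 * Real.log (√(x - a) * √(b - z) + √(z - a) * √(b - x)) - Real.log (x - z)

/-- Antiderivative of the integrand, normalised at the left edge. -/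
noncomputable def mpFL (a b x z : ℝ) : ℝ :=
  2 * arctan (√(z - a) / √(b - z))
    - 2 * (√a * √b / x) * arctan (√b / √a * (√(z - a) / √(b - z)))
    + √(x - a) * √(b - x) / x * mpLog a b x z

/-- Antiderivative of the integrand, normalised at the right edge. -/
noncomputable def mpFR (a b x z : ℝ) : ℝ :=
  -(2 * arctan (√(b - z) / √(z - a)))
    + 2 * (√a * √b / x) * arctan (√a / √b * (√(b - z) / √(z - a)))
    + √(x - a) * √(b - x) / x * mpLog a b x z

lemma hasDerivAt_sqrtA (a z : ℝ) (h : a < z) :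
    HasDerivAt (fun z => √(z - a)) (1 / (2 * √(z - a))) z := by
  simpa using ((hasDerivAt_id z).sub_const a).sqrt (by simp; linarith)

lemma hasDerivAt_sqrtB (b z : ℝ) (h : z < b) :
    HasDerivAt (fun z => √(b - z)) (-1 / (2 * √(b - z))) z := by
  simpa using ((hasDerivAt_id z).const_sub b).sqrt (by simp; linarith)

lemma mpLog_deriv (a b x z : ℝ) (hax : a < x) (hxb : x < b)
    (haz : a < z) (hzb : z < b) (hz : z ≠ x) :
    HasDerivAt (mpLog a b x)
      (√(x - a) * √(b - x) / ((x - z) * (√(z - a) * √(b - z)))) z := by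
  have hA := Real.sqrt_pos.2 (sub_pos.2 haz)
  have hB := Real.sqrt_pos.2 (sub_pos.2 hzb)
  have hA0 := Real.sqrt_pos.2 (sub_pos.2 hax)
  have hB0 := Real.sqrt_pos.2 (sub_pos.2 hxb)
  have hxz : x - z ≠ 0 := sub_ne_zero.2 hz.symm
  have hpos : √(x - a) * √(b - z) + √(z - a) * √(b - x) ≠ 0 := by positivity
  have h1 := ((((hasDerivAt_sqrtB b z hzb).const_mul √(x - a)).add
    ((hasDerivAt_sqrtA a z haz).mul_const √(b - x))).log hpos).const_mul 2
  have h2 := ((hasDerivAt_id z).const_sub x).log hxz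
  have h3 := h1.sub h2
  refine h3.congr_deriv ?_
  have eA := Real.sq_sqrt (sub_pos.2 haz).le
  have eB := Real.sq_sqrt (sub_pos.2 hzb).le
  have eA0 := Real.sq_sqrt (sub_pos.2 hax).le
  have eB0 := Real.sq_sqrt (sub_pos.2 hxb).le
  simp only [Pi.add_apply, id]
  generalize √(z - a) = A at *
  generalize √(b - z) = B at *
  generalize √(x - a) = A0 at *
  generalize √(b - x) = B0 at *
  have e1 : x - z = A0 ^ 2 - A ^ 2 := by linarith
  have e2 : B0 ^ 2 = A ^ 2 + B ^ 2 - A0 ^ 2 := by linarith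
  have e3 : (B0 * B - A0 * A) * (A0 ^ 2 - A ^ 2) + A * B * (A0 * B + A * B0)
      = A0 * B0 * (A0 * B + A * B0) := by
    linear_combination (-A0 * A) * e2
  rw [e1] at hxz ⊢
  field_simp
  linear_combination e3

lemma mpArcL_deriv (a b z p q : ℝ) (hp : p ^ 2 = a) (hq : q ^ 2 = b) (ha : 0 ≤ a)
    (haz : a < z) (hzb : z < b) :
    HasDerivAt (fun z => p * q * arctan (q / p * (√(z - a) / √(b - z))))
      (a * b / (2 * z * (√(z - a) * √(b - z)))) z := by
  rcases eq_or_ne p 0 with h0 | h0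
  · have : a = 0 := by rw [← hp, h0]; ring
    subst h0
    simp only [zero_mul, this]
    simpa using hasDerivAt_const z (0 : ℝ)
  have hA := Real.sqrt_pos.2 (sub_pos.2 haz)
  have hB := Real.sqrt_pos.2 (sub_pos.2 hzb)
  have h1 := ((((hasDerivAt_sqrtA a z haz).div (hasDerivAt_sqrtB b z hzb) hB.ne').const_mul
    (q / p)).arctan).const_mul (p * q)
  refine h1.congr_deriv ?_
  have eA := Real.sq_sqrt (sub_pos.2 haz).le
  have eB := Real.sq_sqrt (sub_pos.2 hzb).le
  have hz : z ≠ 0 := by linarith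
  simp only [Pi.div_apply]
  generalize √(z - a) = A at *
  generalize √(b - z) = B at *
  have hne : p ^ 2 * B ^ 2 + q ^ 2 * A ^ 2 ≠ 0 := by positivity
  have e : p ^ 2 * B ^ 2 + q ^ 2 * A ^ 2 = z * (A ^ 2 + B ^ 2) := by
    rw [hp, hq, eA, eB]; ring
  rw [← hp, ← hq]
  have : 1 + (q / p * (A / B)) ^ 2 = z * (A ^ 2 + B ^ 2) / (p ^ 2 * B ^ 2) := by
    rw [← e]; field_simp
  rw [this]
  have : A ^ 2 + B ^ 2 ≠ 0 := by positivity
  field_simp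
  ring

lemma mpArcR_deriv (a b z p q : ℝ) (hp : p ^ 2 = a) (hq : q ^ 2 = b) (ha : 0 ≤ a)
    (haz : a < z) (hzb : z < b) :
    HasDerivAt (fun z => p * q * arctan (p / q * (√(b - z) / √(z - a))))
      (-(a * b / (2 * z * (√(z - a) * √(b - z))))) z := by
  have h0 : q ≠ 0 := by rintro rfl; nlinarith
  have hA := Real.sqrt_pos.2 (sub_pos.2 haz)
  have hB := Real.sqrt_pos.2 (sub_pos.2 hzb)
  have h1 := ((((hasDerivAt_sqrtB b z hzb).div (hasDerivAt_sqrtA a z haz) hA.ne').const_mul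
    (p / q)).arctan).const_mul (p * q)
  refine h1.congr_deriv ?_
  have eA := Real.sq_sqrt (sub_pos.2 haz).le
  have eB := Real.sq_sqrt (sub_pos.2 hzb).le
  have hz : z ≠ 0 := by linarith
  simp only [Pi.div_apply]
  generalize √(z - a) = A at *
  generalize √(b - z) = B at *
  have e : p ^ 2 * B ^ 2 + q ^ 2 * A ^ 2 = z * (A ^ 2 + B ^ 2) := by
    rw [hp, hq, eA, eB]; ring
  rw [← hp, ← hq]
  have : 1 + (p / q * (B / A)) ^ 2 = z * (A ^ 2 + B ^ 2) / (q ^ 2 * A ^ 2) := by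
    rw [← e]; field_simp; ring
  rw [this]
  have : A ^ 2 + B ^ 2 ≠ 0 := by positivity
  field_simp
  ring

lemma mpArcL1_deriv (a b z : ℝ) (haz : a < z) (hzb : z < b) :
    HasDerivAt (fun z => arctan (√(z - a) / √(b - z)))
      (1 / (2 * (√(z - a) * √(b - z)))) z := by
  have hA := Real.sqrt_pos.2 (sub_pos.2 haz)
  have hB := Real.sqrt_pos.2 (sub_pos.2 hzb)
  have h1 := ((hasDerivAt_sqrtA a z haz).div (hasDerivAt_sqrtB b z hzb) hB.ne').arctan
  refine h1.congr_deriv ?_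
  simp only [Pi.div_apply]
  generalize √(z - a) = A at *
  generalize √(b - z) = B at *
  field_simp
  ring

lemma mpArcR1_deriv (a b z : ℝ) (haz : a < z) (hzb : z < b) :
    HasDerivAt (fun z => arctan (√(b - z) / √(z - a)))
      (-(1 / (2 * (√(z - a) * √(b - z))))) z := by
  have hA := Real.sqrt_pos.2 (sub_pos.2 haz)
  have hB := Real.sqrt_pos.2 (sub_pos.2 hzb)
  have h1 := ((hasDerivAt_sqrtB b z hzb).div (hasDerivAt_sqrtA a z haz) hA.ne').arctan
  refine h1.congr_deriv ?_
  simp only [Pi.div_apply]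
  generalize √(z - a) = A at *
  generalize √(b - z) = B at *
  field_simp
  ring

lemma mp_alg (a b x z : ℝ) (ha : 0 ≤ a) (hax : a < x) (hxb : x < b)
    (haz : a < z) (hzb : z < b) (hz : z ≠ x) :
    2 * (1 / (2 * (√(z - a) * √(b - z)))) - 2 / x * (a * b / (2 * z * (√(z - a) * √(b - z))))
      + √(x - a) * √(b - x) / x *
        (√(x - a) * √(b - x) / ((x - z) * (√(z - a) * √(b - z))))
      = √(z - a) * √(b - z) / (z * (x - z)) := by
  have hA := Real.sqrt_pos.2 (sub_pos.2 haz)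
  have hB := Real.sqrt_pos.2 (sub_pos.2 hzb)
  have eA := Real.sq_sqrt (sub_pos.2 haz).le
  have eB := Real.sq_sqrt (sub_pos.2 hzb).le
  have eA0 := Real.sq_sqrt (sub_pos.2 hax).le
  have eB0 := Real.sq_sqrt (sub_pos.2 hxb).le
  have hxz : x - z ≠ 0 := sub_ne_zero.2 hz.symm
  have hz0 : z ≠ 0 := by linarith
  have hx0 : x ≠ 0 := by linarith
  generalize √(z - a) = A at *
  generalize √(b - z) = B at *
  generalize √(x - a) = A0 at *
  generalize √(b - x) = B0 at *
  field_simp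
  rw [eA, eB, eA0, eB0]
  ring

lemma mpFL_deriv (a b x z : ℝ) (ha : 0 ≤ a) (hax : a < x) (hxb : x < b)
    (haz : a < z) (hzb : z < b) (hz : z ≠ x) :
    HasDerivAt (mpFL a b x) (√(z - a) * √(b - z) / (z * (x - z))) z := by
  have h := (((mpArcL1_deriv a b z haz hzb).const_mul 2).sub
    ((mpArcL_deriv a b z √a √b (Real.sq_sqrt ha) (Real.sq_sqrt (by linarith)) ha haz hzb).const_mul
      (2 / x))).add ((mpLog_deriv a b x z hax hxb haz hzb hz).const_mul (√(x - a) * √(b - x) / x))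
  rw [mp_alg a b x z ha hax hxb haz hzb hz] at h
  refine h.congr_of_eventuallyEq (Eventually.of_forall fun w => ?_)
  simp only [mpFL, Pi.add_apply, Pi.sub_apply]
  ring

lemma mpFR_deriv (a b x z : ℝ) (ha : 0 ≤ a) (hax : a < x) (hxb : x < b)
    (haz : a < z) (hzb : z < b) (hz : z ≠ x) :
    HasDerivAt (mpFR a b x) (√(z - a) * √(b - z) / (z * (x - z))) z := by
  have h := (((mpArcR1_deriv a b z haz hzb).const_mul (-2)).add
    ((mpArcR_deriv a b z √a √b (Real.sq_sqrt ha) (Real.sq_sqrt (by linarith)) ha haz hzb).const_mul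
      (2 / x))).add ((mpLog_deriv a b x z hax hxb haz hzb hz).const_mul (√(x - a) * √(b - x) / x))
  have e := mp_alg a b x z ha hax hxb haz hzb hz
  refine (h.congr_deriv (g' := √(z - a) * √(b - z) / (z * (x - z)))
    (by rw [← e]; ring)).congr_of_eventuallyEq (Eventually.of_forall fun w => ?_)
  simp only [mpFR, Pi.add_apply]
  ring

lemma mpLog_cont (a b x : ℝ) (hax : a < x) (hxb : x < b) :
    ContinuousOn (mpLog a b x) (Icc a b \ {x}) := by
  unfold mpLog
  have hA0 := Real.sqrt_pos.2 (sub_pos.2 hax)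
  have hB0 := Real.sqrt_pos.2 (sub_pos.2 hxb)
  refine (continuousOn_const.mul (ContinuousOn.log (by fun_prop) ?_)).sub
    (ContinuousOn.log (by fun_prop) ?_)
  · rintro z ⟨⟨h1, h2⟩, -⟩
    rcases h1.eq_or_lt with h | h
    · have := Real.sqrt_pos.2 (show 0 < b - z by linarith)
      positivity
    · have := Real.sqrt_pos.2 (show 0 < z - a by linarith)
      positivity
  · rintro z ⟨-, h⟩
    exact sub_ne_zero.2 (Ne.symm h)

lemma mpFL_cont (a b x d : ℝ) (hax : a < x) (hxb : x < b) (hd : d < x) :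
    ContinuousOn (mpFL a b x) (Icc a d) := by
  have h := (mpLog_cont a b x hax hxb).mono (t := Icc a d)
    (fun z hz => ⟨⟨hz.1, by linarith [hz.2]⟩, by simp; linarith [hz.2]⟩)
  have hs : ContinuousOn (fun z => √(z - a) / √(b - z)) (Icc a d) :=
    ContinuousOn.div (by fun_prop) (by fun_prop)
      (fun z hz => (Real.sqrt_pos.2 (by linarith [hz.2])).ne')
  unfold mpFL
  exact ((continuousOn_const.mul (Real.continuous_arctan.comp_continuousOn hs)).sub
    (continuousOn_const.mul (Real.continuous_arctan.comp_continuousOn (continuousOn_const.mul hs)))).add (continuousOn_const.mul h)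

lemma mpFR_cont (a b x d : ℝ) (hax : a < x) (hxb : x < b) (hd : x < d) :
    ContinuousOn (mpFR a b x) (Icc d b) := by
  have h := (mpLog_cont a b x hax hxb).mono (t := Icc d b)
    (fun z hz => ⟨⟨by linarith [hz.1], hz.2⟩, by simp; linarith [hz.1]⟩)
  have hs : ContinuousOn (fun z => √(b - z) / √(z - a)) (Icc d b) :=
    ContinuousOn.div (by fun_prop) (by fun_prop)
      (fun z hz => (Real.sqrt_pos.2 (by linarith [hz.1])).ne')
  unfold mpFR
  exact ((continuousOn_const.mul (Real.continuous_arctan.comp_continuousOn hs)).neg.add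
    (continuousOn_const.mul (Real.continuous_arctan.comp_continuousOn (continuousOn_const.mul hs)))).add (continuousOn_const.mul h)

lemma mpLog_left (a b x : ℝ) (hax : a < x) (hxb : x < b) : mpLog a b x a = Real.log (b - a) := by
  have h1 := Real.sqrt_pos.2 (sub_pos.2 hax)
  have h2 := Real.sqrt_pos.2 (sub_pos.2 (hax.trans hxb))
  simp only [mpLog, sub_self, Real.sqrt_zero, zero_mul, add_zero]
  rw [Real.log_mul h1.ne' h2.ne', Real.log_sqrt (by linarith), Real.log_sqrt (by linarith)]
  ring

lemma mpLog_right (a b x : ℝ) (hax : a < x) (hxb : x < b) : mpLog a b x b = Real.log (b - a) := by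
  have h1 := Real.sqrt_pos.2 (sub_pos.2 hxb)
  have h2 := Real.sqrt_pos.2 (sub_pos.2 (hax.trans hxb))
  simp only [mpLog, sub_self, Real.sqrt_zero, mul_zero, zero_add]
  rw [Real.log_mul h2.ne' h1.ne', Real.log_sqrt (by linarith), Real.log_sqrt (by linarith),
    ← neg_sub b x, Real.log_neg_eq_log]
  ring

lemma mp_intL (a b x d : ℝ) (ha : 0 ≤ a) (hax : a < x) (hxb : x < b) (had : a < d) (hd : d < x) :
    IntervalIntegrable (fun z => √(z - a) * √(b - z) / (z * (x - z))) volume a d ∧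
    ∫ z in a..d, √(z - a) * √(b - z) / (z * (x - z)) = mpFL a b x d - mpFL a b x a := by
  have hc := mpFL_cont a b x d hax hxb hd
  have hder : ∀ z ∈ Ioo a d, HasDerivAt (mpFL a b x) (√(z - a) * √(b - z) / (z * (x - z))) z :=
    fun z hz => mpFL_deriv a b x z ha hax hxb hz.1 (by linarith [hz.2]) (by linarith [hz.2])
  have hi : IntervalIntegrable (fun z => √(z - a) * √(b - z) / (z * (x - z))) volume a d := by
    apply intervalIntegral.intervalIntegrable_deriv_of_nonneg (g := mpFL a b x)
    · rwa [uIcc_of_le had.le]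
    · rwa [min_eq_left had.le, max_eq_right had.le]
    · rw [min_eq_left had.le, max_eq_right had.le]
      intro z hz
      have : 0 < z := by linarith [hz.1]
      have : 0 < x - z := by linarith [hz.2]
      positivity
  exact ⟨hi, intervalIntegral.integral_eq_sub_of_hasDerivAt_of_le had.le hc hder hi⟩

lemma mp_intR (a b x d : ℝ) (ha : 0 ≤ a) (hax : a < x) (hxb : x < b) (hdb : d < b) (hd : x < d) :
    IntervalIntegrable (fun z => √(z - a) * √(b - z) / (z * (x - z))) volume d b ∧
    ∫ z in d..b, √(z - a) * √(b - z) / (z * (x - z)) = mpFR a b x b - mpFR a b x d := by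
  have hc := mpFR_cont a b x d hax hxb hd
  have hder : ∀ z ∈ Ioo d b, HasDerivAt (mpFR a b x) (√(z - a) * √(b - z) / (z * (x - z))) z :=
    fun z hz => mpFR_deriv a b x z ha hax hxb (by linarith [hz.1]) hz.2 (by linarith [hz.1])
  have hi : IntervalIntegrable (fun z => √(z - a) * √(b - z) / (z * (x - z))) volume d b := by
    rw [← neg_neg (fun z => √(z - a) * √(b - z) / (z * (x - z)))]
    refine IntervalIntegrable.neg ?_
    apply intervalIntegral.intervalIntegrable_deriv_of_nonneg (g := -(mpFR a b x))
    · rw [uIcc_of_le hdb.le]; exact hc.neg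
    · rw [min_eq_left hdb.le, max_eq_right hdb.le]
      exact fun z hz => (hder z hz).neg
    · rw [min_eq_left hdb.le, max_eq_right hdb.le]
      intro z hz
      have : 0 < z := by linarith [hz.1]
      have : 0 < z - x := by linarith [hz.1]
      have e : (-fun z => √(z - a) * √(b - z) / (z * (x - z))) z
        = √(z - a) * √(b - z) / (z * (z - x)) := by
        simp only [Pi.neg_apply]
        rw [← div_neg]; congr 1; ring
      rw [e]
      positivity
  exact ⟨hi, intervalIntegral.integral_eq_sub_of_hasDerivAt_of_le hdb.le hc hder hi⟩

lemma mp_limit (a b x : ℝ) (ha : 0 ≤ a) (hax : a < x) (hxb : x < b) :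
    Tendsto (fun ε => (mpFL a b x (x - ε) - mpFL a b x a) + (mpFR a b x b - mpFR a b x (x + ε)))
      (𝓝[>] 0) (𝓝 (π * (x - √a * √b) / x)) := by
  have hA0 := Real.sqrt_pos.2 (sub_pos.2 hax)
  have hB0 := Real.sqrt_pos.2 (sub_pos.2 hxb)
  have hb := Real.sqrt_pos.2 (show 0 < b by linarith)
  have hx0 : x ≠ 0 := by linarith
  let Ψ : ℝ → ℝ := fun ε =>
    2 * (arctan (√(x - ε - a) / √(b - (x - ε))) + arctan (√(b - (x + ε)) / √(x + ε - a)))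
    - 2 * (√a * √b / x) * (arctan (√b / √a * (√(x - ε - a) / √(b - (x - ε))))
        + arctan (√a / √b * (√(b - (x + ε)) / √(x + ε - a))))
    + √(x - a) * √(b - x) / x *
      (2 * Real.log (√(x - a) * √(b - (x - ε)) + √(x - ε - a) * √(b - x))
        - 2 * Real.log (√(x - a) * √(b - (x + ε)) + √(x + ε - a) * √(b - x)))
  have hΨ0 : Ψ 0 = π * (x - √a * √b) / x := by
    have key : ∀ s : ℝ, 0 < s → arctan s + arctan s⁻¹ = π / 2 := by
      intro s hs
      rw [arctan_inv_of_pos hs]; ring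
    have e1 := key (√(x - a) / √(b - x)) (by positivity)
    have e2 : √a * √b * (arctan (√b / √a * (√(x - a) / √(b - x)))
        + arctan (√a / √b * (√(b - x) / √(x - a)))) = √a * √b * (π / 2) := by
      rcases (Real.sqrt_nonneg a).eq_or_lt with h | h
      · rw [← h]; ring
      · rw [← key (√b / √a * (√(x - a) / √(b - x))) (by positivity), mul_inv, inv_div, inv_div]
    rw [inv_div] at e1
    simp only [Ψ, sub_zero, add_zero, sub_self, mul_zero]
    rw [e1]
    generalize arctan (√b / √a * (√(x - a) / √(b - x)))
        + arctan (√a / √b * (√(b - x) / √(x - a))) = T at *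
    field_simp
    linear_combination -2 * e2
  have hΨc : ContinuousAt Ψ 0 := by
    have c1 : ContinuousAt (fun ε : ℝ => √(x - ε - a) / √(b - (x - ε))) 0 :=
      ContinuousAt.div (by fun_prop) (by fun_prop) (by simpa using hB0.ne')
    have c2 : ContinuousAt (fun ε : ℝ => √(b - (x + ε)) / √(x + ε - a)) 0 :=
      ContinuousAt.div (by fun_prop) (by fun_prop) (by simpa using hA0.ne')
    have c3 : ContinuousAt (fun ε : ℝ =>
        Real.log (√(x - a) * √(b - (x - ε)) + √(x - ε - a) * √(b - x))) 0 :=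
      ContinuousAt.log (by fun_prop) (by simp only [sub_zero]; positivity)
    have c4 : ContinuousAt (fun ε : ℝ =>
        Real.log (√(x - a) * √(b - (x + ε)) + √(x + ε - a) * √(b - x))) 0 :=
      ContinuousAt.log (by fun_prop) (by simp only [add_zero]; positivity)
    have ca : ∀ {f : ℝ → ℝ}, ContinuousAt f 0 → ContinuousAt (fun ε => arctan (f ε)) 0 :=
      fun hf => Real.continuous_arctan.continuousAt.comp hf
    exact ((continuousAt_const.mul ((ca c1).add (ca c2))).sub
      (continuousAt_const.mul ((ca (continuousAt_const.mul c1)).add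
        (ca (continuousAt_const.mul c2))))).add
      (continuousAt_const.mul ((continuousAt_const.mul c3).sub (continuousAt_const.mul c4)))
  have hlim : Tendsto Ψ (𝓝[>] 0) (𝓝 (Ψ 0)) := hΨc.tendsto.mono_left nhdsWithin_le_nhds
  rw [hΨ0] at hlim
  refine hlim.congr fun ε => ?_
  have e1 : mpFL a b x a = √(x - a) * √(b - x) / x * Real.log (b - a) := by
    simp [mpFL, mpLog_left a b x hax hxb]
  have e2 : mpFR a b x b = √(x - a) * √(b - x) / x * Real.log (b - a) := by
    simp [mpFR, mpLog_right a b x hax hxb]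
  have e3 : Real.log (x - (x + ε)) = Real.log (x - (x - ε)) := by
    rw [← Real.log_neg_eq_log]; congr 1; ring
  rw [e1, e2]
  simp only [Ψ, mpFL, mpFR, mpLog, e3]
  ring

lemma mp_hilbert (a b x : ℝ) (ha : 0 ≤ a) (hax : a < x) (hxb : x < b) :
    HasHilbertTransform
      (fun z => (Ioo a b).indicator (fun z => √((b - z) * (z - a)) / (2 * π * z)) z) x
      ((x - √a * √b) / (2 * π * x)) := by
  unfold HasHilbertTransform
  have hx0 : x ≠ 0 := by linarith
  have hlim := (mp_limit a b x ha hax hxb).const_mul (1 / π * (1 / (2 * π)))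
  have e : 1 / π * (1 / (2 * π)) * (π * (x - √a * √b) / x) = (x - √a * √b) / (2 * π * x) := by
    field_simp
  rw [e] at hlim
  refine hlim.congr' ?_
  have hm : 0 < min (x - a) (b - x) := lt_min (by linarith) (by linarith)
  filter_upwards [Ioo_mem_nhdsGT hm] with ε hε
  have h1 : ε < x - a := lt_of_lt_of_le hε.2 (min_le_left _ _)
  have h2 : ε < b - x := lt_of_lt_of_le hε.2 (min_le_right _ _)
  have h0 := hε.1
  rw [mul_assoc]
  congr 1
  obtain ⟨iL, vL⟩ := mp_intL a b x (x - ε) ha hax hxb (by linarith) (by linarith)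
  obtain ⟨iR, vR⟩ := mp_intR a b x (x + ε) ha hax hxb (by linarith) (by linarith)
  rw [← vL, ← vR]
  rw [intervalIntegral.integral_of_le (by linarith), intervalIntegral.integral_of_le (by linarith),
    integral_Ioc_eq_integral_Ioo, integral_Ioc_eq_integral_Ioo]
  rw [intervalIntegrable_iff_integrableOn_Ioo_of_le (by linarith)] at iL iR
  rw [← setIntegral_union (by
    rw [Set.disjoint_left]; intro z hz hz'; linarith [hz.2, hz'.1]) measurableSet_Ioo iL iR]
  have hset : {y : ℝ | ε < |x - y|} ∩ Ioo a b = Ioo a (x - ε) ∪ Ioo (x + ε) b := by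
    ext z
    simp only [mem_inter_iff, Set.mem_ofPred_eq, mem_Ioo, mem_union, lt_abs]
    constructor
    · rintro ⟨h | h, h3, h4⟩
      · left; constructor <;> linarith
      · right; constructor <;> linarith
    · rintro (⟨h3, h4⟩ | ⟨h3, h4⟩)
      · exact ⟨Or.inl (by linarith), by linarith, by linarith⟩
      · exact ⟨Or.inr (by linarith), by linarith, by linarith⟩
  have hind : (fun z => (Ioo a b).indicator (fun z => √((b - z) * (z - a)) / (2 * π * z)) z
      / (x - z)) = (Ioo a b).indicator
        (fun z => 1 / (2 * π) * (√(z - a) * √(b - z) / (z * (x - z)))) := by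
    funext z
    by_cases hz : z ∈ Ioo a b
    · rw [indicator_of_mem hz, indicator_of_mem hz, Real.sqrt_mul (by linarith [hz.2])]
      rw [div_div, div_mul_div_comm, one_mul]
      congr 1 <;> ring
    · rw [indicator_of_notMem hz, indicator_of_notMem hz, zero_div]
  rw [hind, setIntegral_indicator measurableSet_Ioo, hset, integral_const_mul]

lemma mp_prod (c s y : ℝ) (hc : 0 ≤ c) (hs : s < 1) :
    (mpXp ((c + s) / (1 - s)) - y / (1 - s)) * (y / (1 - s) - mpXm ((c + s) / (1 - s)))
      = (2 * (2 + c - s) * y - (c + s) ^ 2 - y ^ 2) / (1 - s) ^ 2 := by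
  have h1 : 0 < 1 - s := by linarith
  have e : (c + s) / (1 - s) + 1 = (c + 1) / (1 - s) := by field_simp; ring
  have hq := Real.sq_sqrt (show 0 ≤ (c + 1) / (1 - s) by positivity)
  unfold mpXp mpXm
  rw [e]
  generalize √((c + 1) / (1 - s)) = r at *
  have hr : r ^ 2 * (1 - s) = c + 1 := by rw [hq]; field_simp
  have hc' : c = r ^ 2 * (1 - s) - 1 := by linarith
  subst hc'
  field_simp
  ring

lemma mp_density (c s y : ℝ) (hc : 0 ≤ c) (hs : s < 1)
    (hy : 0 < 2 * (2 + c - s) * y - (c + s) ^ 2 - y ^ 2) :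
    y / (1 - s) ∈ Ioo (mpXm ((c + s) / (1 - s))) (mpXp ((c + s) / (1 - s))) ∧
    mpDensity ((c + s) / (1 - s)) (y / (1 - s))
      = √(2 * (2 + c - s) * y - (c + s) ^ 2 - y ^ 2) / (2 * π * y) := by
  have h1 : 0 < 1 - s := by linarith
  have hp := mp_prod c s y hc hs
  have hpos : 0 < (2 * (2 + c - s) * y - (c + s) ^ 2 - y ^ 2) / (1 - s) ^ 2 := by positivity
  have hle : mpXm ((c + s) / (1 - s)) ≤ mpXp ((c + s) / (1 - s)) := by
    unfold mpXm mpXp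
    nlinarith [Real.sqrt_nonneg ((c + s) / (1 - s) + 1)]
  have hmem : y / (1 - s) ∈ Ioo (mpXm ((c + s) / (1 - s))) (mpXp ((c + s) / (1 - s))) := by
    rw [← hp] at hpos
    rcases mul_pos_iff.1 hpos with ⟨h, h'⟩ | ⟨h, h'⟩
    · constructor <;> linarith
    · exfalso; linarith
  refine ⟨hmem, ?_⟩
  unfold mpDensity
  rw [indicator_of_mem hmem, hp, Real.sqrt_div hy.le, Real.sqrt_sq h1.le]
  field_simp

lemma mp_scale (c t : ℝ) (ht : t < 1) :
    (fun z => mpDensity c (z / (1 - t))) = fun z =>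
      (Ioo ((1 - t) * mpXm c) ((1 - t) * mpXp c)).indicator
        (fun z => √(((1 - t) * mpXp c - z) * (z - (1 - t) * mpXm c)) / (2 * π * z)) z := by
  have h1 : 0 < 1 - t := by linarith
  funext z
  unfold mpDensity
  have hiff : z / (1 - t) ∈ Ioo (mpXm c) (mpXp c)
      ↔ z ∈ Ioo ((1 - t) * mpXm c) ((1 - t) * mpXp c) := by
    simp only [mem_Ioo]
    rw [lt_div_iff₀' h1, div_lt_iff₀' h1]
  by_cases hz : z ∈ Ioo ((1 - t) * mpXm c) ((1 - t) * mpXp c)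
  · rw [indicator_of_mem hz, indicator_of_mem (hiff.2 hz)]
    have e : ((1 - t) * mpXp c - z) * (z - (1 - t) * mpXm c)
        = (1 - t) ^ 2 * ((mpXp c - z / (1 - t)) * (z / (1 - t) - mpXm c)) := by
      field_simp
    rw [e, Real.sqrt_mul (sq_nonneg (1 - t)), Real.sqrt_sq h1.le]
    field_simp
  · rw [indicator_of_notMem hz, indicator_of_notMem (fun h => hz (hiff.1 h))]

/-- The Marchenko–Pastur family `u_c(t,x) = v((c+t)/(1−t), x/(1−t))` solves the nonlocal
transport equation `∂_t u + (1/π)·∂_x[arctan(Hu/u)] = 0` on its support: for every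
`t ∈ [0,1)` and `x` with `2(2+c−t)x − (c+t)² − x² > 0`. -/
theorem marchenko_pastur_solves_transport_equation (c : ℝ) (hc : 0 ≤ c)
    (t : ℝ) (ht : t ∈ Set.Ico (0 : ℝ) 1) (x : ℝ)
    (hx : 0 < 2 * (2 + c - t) * x - (c + t) ^ 2 - x ^ 2) :
    ∃ Hu : ℝ → ℝ,
      (∀ y : ℝ, 0 < 2 * (2 + c - t) * y - (c + t) ^ 2 - y ^ 2 →
        HasHilbertTransform (fun z => mpDensity ((c + t) / (1 - t)) (z / (1 - t))) y (Hu y)) ∧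
      ∃ ut a : ℝ,
        HasDerivAt (fun s : ℝ => mpDensity ((c + s) / (1 - s)) (x / (1 - s))) ut t ∧
        HasDerivAt (fun y =>
          Real.arctan (Hu y / mpDensity ((c + t) / (1 - t)) (y / (1 - t)))) a x ∧
        ut + (1 / π) * a = 0 := by
  have ht1 : 0 < 1 - t := by linarith [ht.2]
  have ht0 := ht.1
  have hpos : ∀ y : ℝ, 0 < 2 * (2 + c - t) * y - (c + t) ^ 2 - y ^ 2 → 0 < y := by
    intro y hy
    by_contra h
    push Not at h
    nlinarith [sq_nonneg (c + t), sq_nonneg y]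
  have hx0 := hpos x hx
  refine ⟨fun y => (y - (c + t)) / (2 * π * y), ?_, ?_⟩
  · intro y hy
    have hmem := (mp_density c t y hc ht.2 hy).1
    rw [mem_Ioo, lt_div_iff₀' ht1, div_lt_iff₀' ht1] at hmem
    have ha : 0 ≤ (1 - t) * mpXm ((c + t) / (1 - t)) := by
      unfold mpXm; positivity
    have h := mp_hilbert _ _ y ha hmem.1 hmem.2
    rw [mp_scale _ t ht.2]
    convert h using 3
    rw [← Real.sqrt_mul ha]
    have e : (1 - t) * mpXm ((c + t) / (1 - t)) * ((1 - t) * mpXp ((c + t) / (1 - t)))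
        = (c + t) ^ 2 := by
      have := mp_prod c t 0 hc ht.2
      simp only [zero_div] at this
      have h2 : mpXm ((c + t) / (1 - t)) * mpXp ((c + t) / (1 - t))
          = (c + t) ^ 2 / (1 - t) ^ 2 := by
        linear_combination -this
      calc _ = (1 - t) ^ 2 * (mpXm ((c + t) / (1 - t)) * mpXp ((c + t) / (1 - t))) := by ring
        _ = _ := by rw [h2]; field_simp
    rw [e, Real.sqrt_sq (by linarith)]
  · set D := 2 * (2 + c - t) * x - (c + t) ^ 2 - x ^ 2 with hD
    have hS := Real.sqrt_pos.2 hx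
    have hSq := Real.sq_sqrt hx.le
    refine ⟨-(x + (c + t)) / (2 * π * x * √D), (x + (c + t)) / (2 * x * √D), ?_, ?_, ?_⟩
    · have hev : (fun s : ℝ => mpDensity ((c + s) / (1 - s)) (x / (1 - s))) =ᶠ[𝓝 t]
          fun s => √(2 * (2 + c - s) * x - (c + s) ^ 2 - x ^ 2) / (2 * π * x) := by
        have hcont : ContinuousAt (fun s : ℝ => 2 * (2 + c - s) * x - (c + s) ^ 2 - x ^ 2) t := by
          fun_prop
        filter_upwards [hcont.eventually (lt_mem_nhds hx), gt_mem_nhds ht.2] with s h1 h2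
        exact (mp_density c s x hc h2 h1).2
      refine HasDerivAt.congr_of_eventuallyEq ?_ hev
      have hd : HasDerivAt (fun s : ℝ => 2 * (2 + c - s) * x - (c + s) ^ 2 - x ^ 2)
          (-2 * x - 2 * (c + t)) t := by
        have := ((((((hasDerivAt_id t).const_sub (2 + c)).const_mul 2).mul_const x).sub
          (((hasDerivAt_id t).const_add c).pow 2)).sub_const (x ^ 2))
        refine this.congr_deriv ?_
        simp
      refine ((hd.sqrt hx.ne').div_const (2 * π * x)).congr_deriv ?_
      rw [← hD]
      field_simp
      ring
    · have hev : (fun y => Real.arctan ((y - (c + t)) / (2 * π * y) /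
            mpDensity ((c + t) / (1 - t)) (y / (1 - t)))) =ᶠ[𝓝 x]
          fun y => Real.arctan ((y - (c + t)) / √(2 * (2 + c - t) * y - (c + t) ^ 2 - y ^ 2)) := by
        have hcont : ContinuousAt (fun y : ℝ => 2 * (2 + c - t) * y - (c + t) ^ 2 - y ^ 2) x := by
          fun_prop
        filter_upwards [hcont.eventually (lt_mem_nhds hx)] with y h1
        rw [(mp_density c t y hc ht.2 h1).2]
        have := hpos y h1
        congr 1
        field_simp
      refine HasDerivAt.congr_of_eventuallyEq ?_ hev
      have hd : HasDerivAt (fun y : ℝ => 2 * (2 + c - t) * y - (c + t) ^ 2 - y ^ 2)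
          (2 * (2 + c - t) - 2 * x) x := by
        have := ((((hasDerivAt_id x).const_mul (2 * (2 + c - t))).sub_const ((c + t) ^ 2)).sub
          ((hasDerivAt_id x).pow 2))
        refine this.congr_deriv ?_
        simp
      refine ((((hasDerivAt_id x).sub_const (c + t)).div (hd.sqrt hx.ne') hS.ne').arctan).congr_deriv ?_
      simp only [Pi.div_apply, id]
      rw [← hD]
      generalize √D = S at *
      have e1 : 1 + ((x - (c + t)) / S) ^ 2 = 4 * (1 - t) * x / S ^ 2 := by
        field_simp
        rw [hSq]; ring
      have e2 : (1 * S - (x - (c + t)) * ((2 * (2 + c - t) - 2 * x) / (2 * S))) / S ^ 2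
          = 2 * (1 - t) * (x + (c + t)) / S ^ 3 := by
        field_simp
        rw [hSq]; ring
      rw [e1, e2]
      field_simp
      ring
    · field_simp
      ring
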